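/- arXiv:1807.05549 — 2 statements merged into one kernel-verified Lean document; each statement's English description precedes it below -/
import Mathlib

section
/- For every integer n ≥ 1, the ℤ-linear span of the numbers d_S, S ⊆ {1,…,n}, equals the subring ℤ[2·cos(π/2^{n+1})] of ℝ generated by 2·cos(π/2^{n+1}). In particular, for every integer r with 1 ≤ r ≤ 2^n − 1, the number 2·cos(rπ/2^{n+1}) is a ℤ-linear combination of the numbers d_S, S ⊆ {1,…,n}. -/
open Real

/-- `c j = 2·cos(π/2^(j+1))` (so `c 0 = 0`). -/
noncomputable def c (j : ℕ) : ℝ := 2 * Real.cos (π / 2 ^ (j + 1))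

/-- `d S = ∏_{j ∈ S} c j` (so `d ∅ = 1`). -/
noncomputable def d (S : Finset ℕ) : ℝ := ∏ j ∈ S, c j

/-!
The relation `c (j + 1) ^ 2 = c j + 2` makes the rings `ℤ[c 0] ⊆ ℤ[c 1] ⊆ …` a tower in which the
square of each new generator lies in the ring below. Each layer is therefore spanned by `1` and its
generator over the previous one, `ℤ[c (j + 1)] = ℤ[c j] + c (j + 1) · ℤ[c j]`. The span of the
subset products of `c 1, …, c n` obeys the same recursion, according to whether a subset contains
the last index, and both recursions start from `ℤ`. Finally `2 cos (r θ)` is the value at `2 cos θ`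
of a rescaled Chebyshev polynomial with integer coefficients.
-/

open Algebra Finset

section Semiring

variable {R A : Type*} [CommSemiring R] [Semiring A] [Algebra R A]

theorem toSubmodule_adjoin_le_of_mul_mem {s : Set A} {M : Submodule R A} (one_mem : 1 ∈ M)
    (mul_mem : ∀ a ∈ s, ∀ x ∈ M, a * x ∈ M) : Subalgebra.toSubmodule (adjoin R s) ≤ M := by
  rw [adjoin_toSubmodule_le]
  intro x hx
  induction hx using Submonoid.closure_induction_left with
  | one => exact one_mem
  | mul_left a ha x _ ih => exact mul_mem a ha x ih

theorem toSubmodule_adjoin_singleton_of_sq_mem {B : Subalgebra R A} {x : A}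
    (hB : B ≤ adjoin R {x}) (hx : x ^ 2 ∈ B) :
    Subalgebra.toSubmodule (adjoin R {x}) =
      Subalgebra.toSubmodule B ⊔ (Subalgebra.toSubmodule B).map (LinearMap.mulLeft R x) := by
  apply le_antisymm
  · refine toSubmodule_adjoin_le_of_mul_mem (Submodule.mem_sup_left (one_mem B)) ?_
    simp only [Set.mem_singleton_iff, forall_eq]
    intro y hy
    obtain ⟨b, hb, _, ⟨b', hb', rfl⟩, rfl⟩ := Submodule.mem_sup.mp hy
    have hsq_mul : x ^ 2 * b' ∈ B := mul_mem hx hb'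
    have hexpand : x * (b + LinearMap.mulLeft R x b') =
        x ^ 2 * b' + LinearMap.mulLeft R x b := by
      simp only [LinearMap.mulLeft_apply]
      noncomm_ring
    rw [hexpand]
    exact Submodule.add_mem_sup hsq_mul (Submodule.mem_map_of_mem hb)
  · refine sup_le hB (Submodule.map_le_iff_le_comap.mpr fun b hb => ?_)
    exact mul_mem (self_mem_adjoin_singleton R x) (hB hb)

end Semiring

section SubsetProducts

variable {ι R A : Type*} [CommSemiring R] [CommSemiring A] [Algebra R A]

variable (R) in
/-- The `R`-linear span of the products `∏ i ∈ S, f i` over the subsets `S` of `s`; the span of the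
numbers `d S`, `S ⊆ {1, …, n}`, is `subsetProdSpan ℤ c (Icc 1 n)` by unfolding. -/
def subsetProdSpan (f : ι → A) (s : Finset ι) : Submodule R A :=
  Submodule.span R ((fun S : Finset ι => ∏ i ∈ S, f i) '' {S | S ⊆ s})

theorem subsetProdSpan_empty (f : ι → A) : subsetProdSpan R f ∅ = 1 := by
  simp only [subsetProdSpan, subset_empty, Set.ofPred_eq_eq_singleton, Set.image_singleton,
    prod_empty, Submodule.one_eq_span]

theorem subsetProdSpan_insert [DecidableEq ι] (f : ι → A) {s : Finset ι} {i : ι} (hi : i ∉ s) :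
    subsetProdSpan R f (insert i s) =
      subsetProdSpan R f s ⊔ (subsetProdSpan R f s).map (LinearMap.mulLeft R (f i)) := by
  have hsubsets : {S | S ⊆ insert i s} = {S | S ⊆ s} ∪ insert i '' {S | S ⊆ s} := by
    simpa [Set.ext_iff] using Finset.ext_iff.mp (powerset_insert s i)
  have hprod : ∀ S ∈ {S | S ⊆ s},
      ∏ j ∈ insert i S, f j = LinearMap.mulLeft R (f i) (∏ j ∈ S, f j) :=
    fun S hS => prod_insert fun hiS => hi (hS hiS)
  simp only [subsetProdSpan, hsubsets, Set.image_union, Submodule.span_union, Submodule.map_span,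
    Set.image_image, Set.image_congr hprod]

theorem subsetProdSpan_Icc_one_eq_adjoin {a : ℕ → A} (zero_mem : a 0 ∈ (⊥ : Subalgebra R A))
    (sq_mem : ∀ j, a (j + 1) ^ 2 ∈ adjoin R {a j})
    (mem_adjoin_succ : ∀ j, a j ∈ adjoin R {a (j + 1)}) (n : ℕ) :
    subsetProdSpan R a (Icc 1 n) = Subalgebra.toSubmodule (adjoin R {a n}) := by
  induction n with
  | zero =>
    have hbot : adjoin R {a 0} = ⊥ := le_bot_iff.mp (adjoin_singleton_le zero_mem)
    rw [hbot, toSubmodule_bot, Icc_eq_empty (by simp), subsetProdSpan_empty]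
  | succ n ih =>
    rw [← insert_Icc_right_eq_Icc_add_one (by simp), subsetProdSpan_insert a (by simp), ih]
    exact (toSubmodule_adjoin_singleton_of_sq_mem
      (adjoin_singleton_le (mem_adjoin_succ n)) (sq_mem n)).symm

end SubsetProducts

theorem c_zero : c 0 = 0 := by simp [c]

theorem c_succ_sq (j : ℕ) : c (j + 1) ^ 2 = c j + 2 := by
  have hangle : π / 2 ^ (j + 1) = 2 * (π / 2 ^ (j + 1 + 1)) := by ring
  rw [c, c, hangle, cos_two_mul]
  ring

theorem span_d_eq_adjoin_c (n : ℕ) :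
    Submodule.span ℤ (d '' {S | S ⊆ Icc 1 n}) = Subalgebra.toSubmodule (adjoin ℤ {c n}) := by
  refine subsetProdSpan_Icc_one_eq_adjoin (c_zero ▸ zero_mem _) (fun j => ?_) (fun j => ?_) n
  · rw [c_succ_sq]
    exact add_mem (self_mem_adjoin_singleton ℤ _) (ofNat_mem _ 2)
  · rw [eq_sub_of_add_eq (c_succ_sq j).symm]
    exact sub_mem (pow_mem (self_mem_adjoin_singleton ℤ _) 2) (ofNat_mem _ 2)

theorem two_mul_cos_int_mul_mem_adjoin (θ : ℝ) (r : ℤ) :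
    2 * cos (r * θ) ∈ adjoin ℤ {2 * cos θ} := by
  rw [← Polynomial.Chebyshev.C_two_mul_real_cos, ← Polynomial.Chebyshev.aeval_C (R := ℤ)]
  exact Polynomial.aeval_mem_adjoin_singleton ℤ _

theorem stmt_2_general (n : ℕ) :
    (Submodule.span ℤ (d '' {S : Finset ℕ | S ⊆ Icc 1 n}) : Set ℝ) =
      (adjoin ℤ {2 * cos (π / 2 ^ (n + 1))} : Subalgebra ℤ ℝ) ∧
    ∀ r : ℤ, 2 * cos (r * π / 2 ^ (n + 1)) ∈
      Submodule.span ℤ (d '' {S : Finset ℕ | S ⊆ Icc 1 n}) := by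
  rw [span_d_eq_adjoin_c]
  refine ⟨rfl, fun r => ?_⟩
  rw [mul_div_assoc]
  exact two_mul_cos_int_mul_mem_adjoin _ r

/-- for `n ≥ 1`, the `ℤ`-span of the numbers `d S`, `S ⊆ {1,…,n}`, equals
the subring `ℤ[2·cos(π/2^(n+1))]` of `ℝ`; in particular every `2·cos(rπ/2^(n+1))`,
`1 ≤ r ≤ 2^n − 1`, is a `ℤ`-linear combination of the `d S`. -/
theorem stmt_2 (n : ℕ) (hn : 1 ≤ n) :
    (Submodule.span ℤ (d '' {S : Finset ℕ | S ⊆ Finset.Icc 1 n}) : Set ℝ) =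
      (Algebra.adjoin ℤ {2 * Real.cos (π / 2 ^ (n + 1))} : Subalgebra ℤ ℝ) ∧
    ∀ r : ℕ, 1 ≤ r → r ≤ 2 ^ n - 1 →
      2 * Real.cos (r * π / 2 ^ (n + 1)) ∈
        Submodule.span ℤ (d '' {S : Finset ℕ | S ⊆ Finset.Icc 1 n}) :=
  ⟨(stmt_2_general n).1, fun r _ _ => mod_cast (stmt_2_general n).2 r⟩
end

section
/- Define natural numbers d(m,n) for m, n ≥ 0 by: d(0,n) = 1 for all n ≥ 0; d(m,0) = 0 for m ≥ 1; and for m, n ≥ 1, d(m,n) = ∑_{s≥0} binomial(m−1, 2s) · 2^{m−1−2s} · d(s, n−1). Let A_n be the adjacency matrix of the path graph on the vertex set {0, 1, …, 2^{n+1}−2} (so with 2^{n+1}−1 vertices, i adjacent to j exactly when |i−j| = 1). Then for all m, n ≥ 0, d(m,n) = ((A_n)^{2m})_{0,0}, the number of walks of length 2m in this path graph beginning and ending at the end vertex 0. -/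
open Real

/-- `d(0,n) = 1`, `d(m,0) = 0` for `m ≥ 1`, and for `m, n ≥ 1`
`d(m,n) = ∑_{s ≥ 0} C(m−1, 2s)·2^(m−1−2s)·d(s, n−1)` (all terms with `2s > m−1` vanish). -/
def dd : ℕ → ℕ → ℕ
  | 0, _ => 1
  | _ + 1, 0 => 0
  | m + 1, n + 1 =>
      ∑ s ∈ Finset.range (m + 1), Nat.choose m (2 * s) * 2 ^ (m - 2 * s) * dd s n
termination_by m n => n

/-- Adjacency matrix of the path graph on `{0,…,N−1}`: `i` adjacent to `j` iff `|i−j| = 1`. -/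
def pathAdj (N : ℕ) : Matrix (Fin N) (Fin N) ℕ :=
  Matrix.of fun i j => if (i : ℕ) + 1 = (j : ℕ) ∨ (j : ℕ) + 1 = (i : ℕ) then 1 else 0

/-!
Removing the two end edges, a closed walk of length `2(m + 1)` at the end vertex of the path on
`2N + 1` vertices is a closed walk of length `2m` at its neighbour, an odd vertex. Grouped in pairs,
its steps stay on the `N` odd vertices: each pair either returns to its starting vertex, in two
ways, or makes one step of the path on `N` vertices. Such walks are therefore counted by
`(pathAdj N + 2) ^ m`. Expanding by the binomial theorem and discarding odd powers, which
contribute no closed walks as the path is bipartite, gives the recursion that defines `dd`.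
-/

section Semiring

variable {ι κ R : Type*} [Fintype ι] [Fintype κ] [Semiring R]

theorem submatrix_mul_of_eq_zero_of_notMem_range {μ ν : Type*} (L : Matrix μ κ R)
    {M : Matrix κ κ R} {f : ι → κ} (hf : f.Injective)
    (hM : ∀ i ∉ Set.range f, ∀ j, M i (f j) = 0) (g : ν → μ) :
    (L * M).submatrix g f = L.submatrix g f * M.submatrix f f := by
  ext i j
  refine (Fintype.sum_of_injective f hf _ _ (fun k hk => ?_) fun _ => rfl).symm
  exact mul_eq_zero_of_right _ (hM k hk j)

variable [DecidableEq ι]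

theorem submatrix_pow_of_eq_zero_of_notMem_range [DecidableEq κ] {M : Matrix κ κ R} {f : ι → κ}
    (hf : f.Injective) (hM : ∀ i ∉ Set.range f, ∀ j, M i (f j) = 0) (m : ℕ) :
    (M ^ m).submatrix f f = M.submatrix f f ^ m := by
  induction m with
  | zero => simp [Matrix.submatrix_one f hf]
  | succ m ih => rw [pow_succ, submatrix_mul_of_eq_zero_of_notMem_range _ hf hM, ih, pow_succ]

-- `hA` says that `A` is homogeneous of degree `g` for the grading `c` of its index set; the
-- adjacency matrix of a bipartite graph has degree `1` for its 2-colouring in `ZMod 2`.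
theorem eq_add_nsmul_of_pow_apply_ne_zero {G : Type*} [AddMonoid G] {A : Matrix ι ι R} {c : ι → G}
    {g : G} (hA : ∀ i j, A i j ≠ 0 → c j = c i + g) {k : ℕ} {i j : ι} (hij : (A ^ k) i j ≠ 0) :
    c j = c i + k • g := by
  induction k generalizing j with
  | zero =>
    obtain rfl : i = j := by
      by_contra hne
      exact hij (by rw [pow_zero, Matrix.one_apply_ne hne])
    simp
  | succ k ih =>
    rw [pow_succ, Matrix.mul_apply] at hij
    obtain ⟨l, -, hl⟩ := Finset.exists_ne_zero_of_sum_ne_zero hij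
    rw [hA l j (right_ne_zero_of_mul hl), ih (left_ne_zero_of_mul hl), add_assoc, succ_nsmul]

theorem pow_add_two_apply_self_of_row_of_col {A : Matrix ι ι R} {a b : ι}
    (hrow : A.row a = Pi.single b 1) (hcol : A.col a = Pi.single b 1) (k : ℕ) :
    (A ^ (k + 2)) a a = (A ^ k) b b :=
  calc
    (A ^ (k + 2)) a a = (A * (A ^ k * A)) a a := by rw [pow_succ, pow_succ', mul_assoc]
    _ = (Matrix.vecMul (A.row a) (A ^ k * A)) a := rfl
    _ = (A ^ k * A) b a := by rw [hrow, Matrix.single_one_vecMul]; rfl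
    _ = (Matrix.mulVec (A ^ k) (A.col a)) b := rfl
    _ = (A ^ k) b b := by rw [hcol, Matrix.mulVec_single_one]; rfl

theorem add_natCast_pow (x : R) (c m : ℕ) :
    (x + c) ^ m = ∑ k ∈ Finset.range (m + 1), (m.choose k * c ^ (m - k)) • x ^ k := by
  rw [(Nat.cast_commute c x).symm.add_pow]
  refine Finset.sum_congr rfl fun k _ => ?_
  rw [nsmul_eq_mul, ← Nat.cast_pow, mul_assoc, ← Nat.cast_mul, ← Nat.cast_comm, mul_comm (_ ^ _)]

end Semiring

theorem sum_range_two_mul_of_odd_eq_zero {M : Type*} [AddCommMonoid M] {f : ℕ → M}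
    (hf : ∀ k, Odd k → f k = 0) (n : ℕ) :
    ∑ k ∈ Finset.range (2 * n), f k = ∑ s ∈ Finset.range n, f (2 * s) := by
  induction n with
  | zero => simp
  | succ n ih =>
    rw [Nat.mul_succ, Finset.sum_range_succ, Finset.sum_range_succ, ih,
      hf _ (odd_two_mul_add_one n), add_zero, Finset.sum_range_succ]

theorem sum_range_choose_smul_of_odd_eq_zero {M : Type*} [AddCommMonoid M] {f : ℕ → M}
    (hf : ∀ k, Odd k → f k = 0) (m : ℕ) :
    ∑ k ∈ Finset.range (m + 1), m.choose k • f k =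
      ∑ s ∈ Finset.range (m + 1), m.choose (2 * s) • f (2 * s) := by
  have odd_term (k : ℕ) (hk : Odd k) : m.choose k • f k = 0 := by rw [hf k hk, smul_zero]
  rw [← sum_range_two_mul_of_odd_eq_zero odd_term]
  refine Finset.sum_subset (Finset.range_mono (by lia)) fun k _ hk => ?_
  rw [Nat.choose_eq_zero_of_lt (by simpa using hk), zero_smul]

section Path

variable {N : ℕ}

theorem pathAdj_pow_apply_eq_zero_of_odd {k : ℕ} {i j : Fin N} (h : Odd ((i : ℕ) + j + k)) :
    (pathAdj N ^ k) i j = 0 := by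
  have step (i j : Fin N) (hij : pathAdj N i j ≠ 0) : ((j : ℕ) : ZMod 2) = (i : ℕ) + 1 := by
    have hadj : (i : ℕ) + 1 = j ∨ (j : ℕ) + 1 = i := by
      by_contra hadj
      exact hij (by simp only [pathAdj, Matrix.of_apply, if_neg hadj])
    rcases hadj with hadj | hadj <;> simp [← hadj, add_assoc, CharTwo.add_self_eq_zero]
  by_contra hne
  have hj := eq_add_nsmul_of_pow_apply_ne_zero step hne
  have h_even : Even ((i : ℕ) + j + k) := by
    rw [← ZMod.natCast_eq_zero_iff_even, Nat.cast_add, Nat.cast_add, hj, nsmul_one]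
    linear_combination ((i : ℕ) + k : ZMod 2) * CharTwo.two_eq_zero (R := ZMod 2)
  exact Nat.not_even_iff_odd.mpr h h_even

theorem mul_pathAdj_apply_add_one {ι : Type*} (M : Matrix ι (Fin N) ℕ) (i : ι) {j : ℕ}
    (hj : j + 2 < N) :
    (M * pathAdj N) i ⟨j + 1, by lia⟩ = M i ⟨j, by lia⟩ + M i ⟨j + 2, hj⟩ := by
  rw [Matrix.mul_apply, Finset.sum_eq_add (⟨j, by lia⟩ : Fin N) ⟨j + 2, hj⟩ (by simp)]
  · simp [pathAdj]
  · intro k _ hk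
    have : ¬((k : ℕ) + 1 = j + 1 ∨ j + 1 + 1 = k) := by
      simp only [ne_eq, Fin.ext_iff] at hk
      lia
    simp only [pathAdj, Matrix.of_apply, if_neg this, mul_zero]
  · simp
  · simp

theorem pathAdj_pow_add_two_apply_zero (hN : 1 < N) (k : ℕ) :
    (pathAdj N ^ (k + 2)) ⟨0, by lia⟩ ⟨0, by lia⟩ = (pathAdj N ^ k) ⟨1, hN⟩ ⟨1, hN⟩ := by
  apply pow_add_two_apply_self_of_row_of_col <;> ext i <;>
    simp [pathAdj, Pi.single_apply, Fin.ext_iff, eq_comm]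

/-- The vertex `2j + 1` of the path on `{0, …, 2N}`; these vertices carry the path on `N` vertices
whose edges are the pairs at distance two. -/
def oddVertex (j : Fin N) : Fin (2 * N + 1) :=
  ⟨2 * j + 1, by lia⟩

theorem oddVertex_injective : (oddVertex (N := N)).Injective := by
  intro i j hij
  simpa [oddVertex, Fin.ext_iff] using hij

theorem even_of_notMem_range_oddVertex {i : Fin (2 * N + 1)} (hi : i ∉ Set.range oddVertex) :
    Even (i : ℕ) := by
  by_contra hodd
  obtain ⟨k, hk⟩ := Nat.not_even_iff_odd.mp hodd
  exact hi ⟨⟨k, by lia⟩, Fin.ext hk.symm⟩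

theorem submatrix_pathAdj_sq_oddVertex :
    (pathAdj (2 * N + 1) ^ 2).submatrix oddVertex oddVertex = pathAdj N + 2 := by
  ext i j
  rw [Matrix.submatrix_apply, sq, oddVertex, oddVertex, mul_pathAdj_apply_add_one _ _ (by lia),
    Matrix.add_apply, Matrix.ofNat_apply]
  simp only [pathAdj, Matrix.of_apply, Fin.ext_iff]
  split_ifs <;> lia

theorem submatrix_pathAdj_pow_oddVertex (m : ℕ) :
    (pathAdj (2 * N + 1) ^ (2 * m)).submatrix oddVertex oddVertex = (pathAdj N + 2) ^ m := by
  rw [pow_mul, submatrix_pow_of_eq_zero_of_notMem_range oddVertex_injective,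
    submatrix_pathAdj_sq_oddVertex]
  intro i hi j
  have hi_even := even_of_notMem_range_oddVertex hi
  exact pathAdj_pow_apply_eq_zero_of_odd (by simp only [oddVertex]; grind)

theorem pathAdj_add_two_pow_apply_self (m : ℕ) (i : Fin N) :
    ((pathAdj N + 2) ^ m) i i = ∑ s ∈ Finset.range (m + 1),
      m.choose (2 * s) * 2 ^ (m - 2 * s) * (pathAdj N ^ (2 * s)) i i := by
  have odd_term (k : ℕ) (hk : Odd k) : 2 ^ (m - k) * (pathAdj N ^ k) i i = 0 := by
    rw [pathAdj_pow_apply_eq_zero_of_odd ((Even.add_self _).add_odd hk), mul_zero]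
  have expansion := add_natCast_pow (pathAdj N) 2 m
  rw [Nat.cast_ofNat] at expansion
  simpa only [expansion, Matrix.sum_apply, Matrix.smul_apply, smul_eq_mul, mul_assoc] using
    sum_range_choose_smul_of_odd_eq_zero odd_term m

theorem pathAdj_two_mul_add_one_pow_apply_zero (hN : 0 < N) (m : ℕ) :
    (pathAdj (2 * N + 1) ^ (2 * (m + 1))) ⟨0, by lia⟩ ⟨0, by lia⟩ =
      ∑ s ∈ Finset.range (m + 1),
        m.choose (2 * s) * 2 ^ (m - 2 * s) * (pathAdj N ^ (2 * s)) ⟨0, hN⟩ ⟨0, hN⟩ := by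
  rw [Nat.mul_succ, pathAdj_pow_add_two_apply_zero (by lia), ← pathAdj_add_two_pow_apply_self,
    ← submatrix_pathAdj_pow_oddVertex]
  rfl

theorem pathAdj_one : pathAdj 1 = 0 := by
  ext i j
  simp [pathAdj]

end Path

/-- `d(m,n)` equals the number of walks of length `2m` starting and ending
at the end vertex `0` of the path graph on `2^(n+1) − 1` vertices. -/
theorem stmt_9 (m n : ℕ) :
    dd m n =
      (pathAdj (2 ^ (n + 1) - 1) ^ (2 * m))
        ⟨0, by have : 1 < 2 ^ (n + 1) := Nat.one_lt_two_pow_iff.mpr (Nat.succ_ne_zero n); omega⟩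
        ⟨0, by have : 1 < 2 ^ (n + 1) := Nat.one_lt_two_pow_iff.mpr (Nat.succ_ne_zero n); omega⟩ := by
  induction n generalizing m with
  | zero => cases m <;> simp [dd, pathAdj_one]
  | succ n ih =>
    cases m with
    | zero => simp [dd]
    | succ m =>
      have hN : 2 ^ (n + 1 + 1) - 1 = 2 * (2 ^ (n + 1) - 1) + 1 := by lia
      generalize_proofs h₀
      revert h₀
      rw [hN, dd]
      intro _
      rw [pathAdj_two_mul_add_one_pow_apply_zero]
      exact Finset.sum_congr rfl fun s _ => by rw [ih]
end
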